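/- arXiv:1605.04949 — 4 statements merged into one kernel-verified Lean document; each statement's English description precedes it below -/
import Mathlib

section
/- Let p ∈ ℤ, and let T be a trade with ℓ(T) < p < w(T) if T is a buy, or w(T) < p < ℓ(T) if T is a sell. Define the trade T' = (p, ℓ(T), w(T), s(T)), i.e., T' opens at p with winning price ℓ(T), losing price w(T), and size s(T) (so σ(T') = −σ(T)). Then for every price path M starting at p that closes both T and T', one has π(T,M) + π(T',M) = σ(T)·(p − o(T))·s(T). -/
/-- A trade: opening price, winning price, losing price, size. -/
structure Trade where
  op : ℤ
  win : ℤ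
  lose : ℤ
  size : ℚ
  deriving DecidableEq

/-- A buy: `w(T) > o(T) > ℓ(T)`. -/
def Trade.IsBuy (T : Trade) : Prop := T.win > T.op ∧ T.op > T.lose

/-- A sell: `w(T) < o(T) < ℓ(T)`. -/
def Trade.IsSell (T : Trade) : Prop := T.win < T.op ∧ T.op < T.lose

/-- A valid trade has positive size and is either a buy or a sell. -/
def Trade.Valid (T : Trade) : Prop := 0 < T.size ∧ (T.IsBuy ∨ T.IsSell)

/-- The sign of a trade: `1` for a buy, `-1` for a sell. -/
def Trade.sign (T : Trade) : ℤ := if T.op < T.win then 1 else -1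

/-- The value of `T` at price `p`: `val(T,p) = σ(T)·(p − o(T))·s(T)`. -/
def Trade.val (T : Trade) (p : ℤ) : ℚ := ((T.sign * (p - T.op) : ℤ) : ℚ) * T.size

/-- A price path starting at `p`: a nonempty finite sequence of integer prices whose
first element is `p` and in which consecutive prices differ by exactly 1. -/
def IsPricePath (p : ℤ) (M : List ℤ) : Prop :=
  M ≠ [] ∧ M.head? = some p ∧ M.Chain' (fun a b => b = a + 1 ∨ b = a - 1)

/-- `w` is reached by `M`, and is reached before `l` is. -/
def ReachesFirst (w l : ℤ) (M : List ℤ) : Prop :=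
  ∃ i : Fin M.length, M.get i = w ∧ ∀ j : Fin M.length, (j : ℕ) < (i : ℕ) → M.get j ≠ l

/-- `T` is won by `M`: the winning price is reached first. -/
def Trade.Wins (T : Trade) (M : List ℤ) : Prop := ReachesFirst T.win T.lose M

/-- `M` closes `T`: it reaches at least one of the winning/losing prices. -/
def Trade.ClosedBy (T : Trade) (M : List ℤ) : Prop := T.win ∈ M ∨ T.lose ∈ M

open Classical in
/-- The closing price of `T` under `M`: whichever of `w(T)`, `ℓ(T)` is reached first. -/
noncomputable def Trade.closePrice (T : Trade) (M : List ℤ) : ℤ :=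
  if T.Wins M then T.win else T.lose

/-- The broker's profit from `T` under `M`: `σ(T)·(close(T,M) − o(T))·s(T)`. -/
noncomputable def Trade.profit (T : Trade) (M : List ℤ) : ℚ :=
  ((T.sign * (T.closePrice M - T.op) : ℤ) : ℚ) * T.size

/-!
`T` and its reversal `T'` are watched at the same two prices, so they close at the same moment, at
a common price `c`. Their signs are opposite and their sizes equal, so `c` cancels:
`σ (c - o) s - σ (c - p) s = σ (p - o) s`.
-/

/-- Opening at `p` with the closing prices of `T` interchanged and the same size: the trade
`T' = (p, ℓ(T), w(T), s(T))`. -/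
def Trade.reversal (T : Trade) (p : ℤ) : Trade := ⟨p, T.lose, T.win, T.size⟩

theorem idxOf_getElem_le {α : Type*} [BEq α] [LawfulBEq α] {M : List α} {n : ℕ}
    (hn : n < M.length) : M.idxOf M[n] ≤ n :=
  not_lt.mp fun hlt => by simpa using List.not_of_lt_findIdx hlt

theorem reachesFirst_iff_mem_and_idxOf_le {w l : ℤ} {M : List ℤ} :
    ReachesFirst w l M ↔ w ∈ M ∧ M.idxOf w ≤ M.idxOf l := by
  constructor
  · rintro ⟨i, rfl, before_ne⟩
    refine ⟨M.get_mem i, not_lt.mp fun hlt => ?_⟩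
    have l_lt_i : M.idxOf l < i := hlt.trans_le (idxOf_getElem_le i.2)
    exact before_ne ⟨M.idxOf l, l_lt_i.trans i.2⟩ l_lt_i (List.getElem_idxOf _)
  · rintro ⟨w_mem, hle⟩
    refine ⟨⟨M.idxOf w, List.idxOf_lt_length_of_mem w_mem⟩, List.getElem_idxOf _, ?_⟩
    rintro j hj rfl
    exact (hj.trans_le hle).not_ge (idxOf_getElem_le j.2)

theorem ReachesFirst.antisymm {w l : ℤ} {M : List ℤ}
    (hwl : ReachesFirst w l M) (hlw : ReachesFirst l w M) : w = l := by
  rw [reachesFirst_iff_mem_and_idxOf_le] at hwl hlw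
  exact (List.idxOf_inj hwl.1).mp (hwl.2.antisymm hlw.2)

theorem ReachesFirst.total {w l : ℤ} {M : List ℤ} (h : w ∈ M ∨ l ∈ M) :
    ReachesFirst w l M ∨ ReachesFirst l w M := by
  simp only [reachesFirst_iff_mem_and_idxOf_le, ← List.idxOf_lt_length_iff] at h ⊢
  omega

namespace Trade

variable {T : Trade} {p : ℤ} {M : List ℤ}

theorem IsBuy.sign_eq (h : T.IsBuy) : T.sign = 1 := if_pos h.1

theorem IsSell.sign_eq (h : T.IsSell) : T.sign = -1 := if_neg h.1.not_gt

theorem IsBuy.sign_reversal (hT : T.IsBuy) (hR : (T.reversal p).IsSell) :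
    (T.reversal p).sign = -T.sign := by
  rw [hT.sign_eq, hR.sign_eq]

theorem IsSell.sign_reversal (hT : T.IsSell) (hR : (T.reversal p).IsBuy) :
    (T.reversal p).sign = -T.sign := by
  rw [hT.sign_eq, hR.sign_eq, neg_neg]

theorem closePrice_reversal (hc : T.ClosedBy M) :
    (T.reversal p).closePrice M = T.closePrice M := by
  by_cases hT : T.Wins M <;> by_cases hR : (T.reversal p).Wins M
  · rw [closePrice, closePrice, if_pos hT, if_pos hR]
    exact hR.antisymm hT
  · rw [closePrice, closePrice, if_pos hT, if_neg hR]
    rfl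
  · rw [closePrice, closePrice, if_neg hT, if_pos hR]
    rfl
  · exact ((ReachesFirst.total hc).elim hT hR).elim

theorem profit_add_profit_reversal (hsign : (T.reversal p).sign = -T.sign)
    (hc : T.ClosedBy M) : T.profit M + (T.reversal p).profit M = T.val p := by
  have hsize : (T.reversal p).size = T.size := rfl
  have hop : (T.reversal p).op = p := rfl
  rw [profit, profit, val, closePrice_reversal hc, hsign, hsize, hop]
  push_cast
  ring

end Trade

theorem reversal_locks_value_general (p : ℤ) (T : Trade) (hT : T.IsBuy ∨ T.IsSell)
    (hbuy : T.IsBuy → T.lose < p ∧ p < T.win)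
    (hsell : T.IsSell → T.win < p ∧ p < T.lose)
    (M : List ℤ) (hc : T.ClosedBy M) :
    T.profit M + (T.reversal p).profit M = T.val p := by
  refine Trade.profit_add_profit_reversal ?_ hc
  rcases hT with buy | sell
  · have reversal_sell : (T.reversal p).IsSell := hbuy buy
    exact buy.sign_reversal reversal_sell
  · have reversal_buy : (T.reversal p).IsBuy := (hsell sell).symm
    exact sell.sign_reversal reversal_buy

/-- Closing a trade at the current price can be simulated: if `T` is a trade whose
closing prices lie strictly on either side of the current price `p`, and
`T' = (p, ℓ(T), w(T), s(T))` is its reversal, then for every price path `M` starting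
at `p` that closes both `T` and `T'`, `π(T,M) + π(T',M) = σ(T)·(p − o(T))·s(T) = val(T,p)`. -/
theorem reversal_locks_value (p : ℤ) (T : Trade) (hT : T.Valid)
    (hbuy : T.IsBuy → T.lose < p ∧ p < T.win)
    (hsell : T.IsSell → T.win < p ∧ p < T.lose)
    (M : List ℤ) (hM : IsPricePath p M)
    (hcT : T.ClosedBy M) (hcT' : (Trade.mk p T.lose T.win T.size).ClosedBy M) :
    T.profit M + (Trade.mk p T.lose T.win T.size).profit M
      = ((T.sign * (p - T.op) : ℤ) : ℚ) * T.size :=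
  reversal_locks_value_general p T hT.2 hbuy hsell M hcT
end

section
/- Let p ∈ ℤ and let 𝒯 be a finite set of trades each satisfying ℓ(T) < p < w(T) (if a buy) or w(T) < p < ℓ(T) (if a sell). For each T ∈ 𝒯 let T' = (p, ℓ(T), w(T), s(T)) be its reversal, and let 𝒯' = {T' : T ∈ 𝒯}. Then for every price path M starting at p that closes all trades of 𝒯 ∪ 𝒯', the total profit satisfies ∑_{T ∈ 𝒯 ∪ 𝒯'} π(T,M) = ∑_{T ∈ 𝒯} σ(T)·(p − o(T))·s(T), independently of M. In particular, by adding the reversal trades the trader locks the broker's total outcome on these trades at the current total value ∑_{T ∈ 𝒯} val(T,p). -/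
/-- The reversal at price `p` of a trade `T`: it opens at `p`, its winning price is
`ℓ(T)`, its losing price is `w(T)`, and it has size `s(T)`. -/
def Trade.rev (T : Trade) (p : ℤ) : Trade := ⟨p, T.lose, T.win, T.size⟩

/-! A trade and its reversal close at the same price `c` but have opposite signs, so their
profits `σ(c - o)s` and `-σ(c - p)s` add up to `σ(p - o)s`, in which `c` has cancelled. -/

theorem reachesFirst_cons {w l a : ℤ} {M : List ℤ} :
    ReachesFirst w l (a :: M) ↔ a = w ∨ a ≠ l ∧ ReachesFirst w l M := by
  simp [ReachesFirst, Fin.exists_fin_succ, Fin.forall_fin_succ, and_left_comm]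

theorem reachesFirst_swap_iff_not {w l : ℤ} {M : List ℤ} (hne : w ≠ l) (hmem : w ∈ M ∨ l ∈ M) :
    ReachesFirst l w M ↔ ¬ ReachesFirst w l M := by
  induction M with
  | nil => simp at hmem
  | cons a M ih =>
    rw [reachesFirst_cons, reachesFirst_cons]
    rcases eq_or_ne a w with rfl | haw
    · simp [hne]
    rcases eq_or_ne a l with rfl | hal
    · simp [haw]
    have hmem_tail : w ∈ M ∨ l ∈ M := by simpa [haw.symm, hal.symm] using hmem
    simp [haw, hal, ih hmem_tail]

namespace Trade

/-- `T` is a buy or a sell that is still open at price `p`: `p` lies strictly between its losing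
and winning prices. -/
def IsOpenAt (T : Trade) (p : ℤ) : Prop :=
  T.IsBuy ∧ T.lose < p ∧ p < T.win ∨ T.IsSell ∧ T.win < p ∧ p < T.lose

variable {T : Trade} {p : ℤ} {M : List ℤ}

theorem IsOpenAt.win_ne_lose (hT : T.IsOpenAt p) : T.win ≠ T.lose := by
  rcases hT with ⟨-, hlose, hwin⟩ | ⟨-, hwin, hlose⟩
  · exact (hlose.trans hwin).ne'
  · exact (hwin.trans hlose).ne

theorem IsOpenAt.sign_rev (hT : T.IsOpenAt p) : (T.rev p).sign = -T.sign := by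
  rcases hT with ⟨⟨hbuy, -⟩, hlose, -⟩ | ⟨⟨hsell, -⟩, -, hlose⟩
  · simp [sign, rev, hbuy, hlose.not_gt]
  · simp [sign, rev, hsell.not_gt, hlose]

theorem closePrice_rev (p : ℤ) (hne : T.win ≠ T.lose) (hclose : T.ClosedBy M) :
    (T.rev p).closePrice M = T.closePrice M := by
  have wins_rev : (T.rev p).Wins M ↔ ¬ T.Wins M := reachesFirst_swap_iff_not hne hclose
  by_cases hwin : T.Wins M
  · rw [closePrice, closePrice, if_pos hwin, if_neg (wins_rev.not_left.mpr hwin)]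
    rfl
  · rw [closePrice, closePrice, if_neg hwin, if_pos (wins_rev.mpr hwin)]
    rfl

theorem IsOpenAt.profit_add_profit_rev (hT : T.IsOpenAt p) (hclose : T.ClosedBy M) :
    T.profit M + (T.rev p).profit M = T.val p := by
  have profit_rev :
      (T.rev p).profit M = ((-T.sign * (T.closePrice M - p) : ℤ) : ℚ) * T.size := by
    rw [profit, hT.sign_rev, closePrice_rev p hT.win_ne_lose hclose]
    rfl
  rw [profit_rev, profit, val]
  push_cast
  ring

end Trade

theorem reversals_lock_total_value_general {p : ℤ} {𝒯 : Multiset Trade} {M : List ℤ}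
    (hopen : ∀ T ∈ 𝒯, T.IsOpenAt p) (hclose : ∀ T ∈ 𝒯, T.ClosedBy M) :
    ((𝒯 + 𝒯.map (fun T => T.rev p)).map (fun T => T.profit M)).sum
      = (𝒯.map (fun T => T.val p)).sum := by
  rw [Multiset.map_add, Multiset.sum_add, Multiset.map_map, ← Multiset.sum_map_add]
  exact congrArg Multiset.sum <| Multiset.map_congr rfl fun T hT =>
    (hopen T hT).profit_add_profit_rev (hclose T hT)

/-- Let `𝒯` be a finite collection of trades whose closing prices lie strictly on either
side of the current price `p`, and let `𝒯' = {T' : T ∈ 𝒯}` be the collection of their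
reversals at `p`.  For every price path `M` starting at `p` that closes all trades of
`𝒯 ∪ 𝒯'`, the total profit `∑_{T ∈ 𝒯 ∪ 𝒯'} π(T,M)` equals
`∑_{T ∈ 𝒯} σ(T)·(p − o(T))·s(T) = ∑_{T ∈ 𝒯} val(T,p)`, independently of `M`. -/
theorem reversals_lock_total_value (p : ℤ) (𝒯 : Multiset Trade)
    (hval : ∀ T ∈ 𝒯, T.Valid)
    (hbuy : ∀ T ∈ 𝒯, T.IsBuy → T.lose < p ∧ p < T.win)
    (hsell : ∀ T ∈ 𝒯, T.IsSell → T.win < p ∧ p < T.lose)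
    (M : List ℤ) (hM : IsPricePath p M)
    (hclose : ∀ T ∈ 𝒯 + 𝒯.map (fun T => T.rev p), T.ClosedBy M) :
    ((𝒯 + 𝒯.map (fun T => T.rev p)).map (fun T => T.profit M)).sum
      = (𝒯.map (fun T => T.val p)).sum :=
  reversals_lock_total_value_general
    (fun T hT => (hval T hT).2.imp (fun h => ⟨h, hbuy T hT h⟩) (fun h => ⟨h, hsell T hT h⟩))
    (fun T hT => hclose T (Multiset.mem_add.mpr (.inl hT)))
end

section
/- Consider a turn of the online game starting from position P = (𝒯, g, p), and let P' = (𝒯', g, p) be the position after the trader has added his new trades. Let P⁺ be the position reached if the broker raises the price to p+1 and P⁻ the position reached if the broker lowers the price to p−1 (in each case closing all triggered trades and crediting their values to the gain). Then Tval(P') = Tval(P), Tval(P⁺) − Tval(P) = ∑_{T ∈ 𝒯'} σ(T)·s(T), and Tval(P⁻) − Tval(P) = −∑_{T ∈ 𝒯'} σ(T)·s(T); hence Tval(P⁺) − Tval(P) = −(Tval(P⁻) − Tval(P)), and in particular at least one of Tval(P⁺) ≥ Tval(P) or Tval(P⁻) ≥ Tval(P) holds. -/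
/-- A position of the online game: the set of open trades, the broker's accumulated
gain, and the current price. -/
structure Pos where
  trades : Finset Trade
  gain : ℚ
  price : ℤ

/-- The value of a position: `∑_{T open} val(T, p)`. -/
def Pos.val (P : Pos) : ℚ := ∑ T ∈ P.trades, T.val P.price

/-- The total value of a position: its value plus the broker's accumulated gain. -/
def Pos.tval (P : Pos) : ℚ := P.val + P.gain

/-- A legal set of trades added by the trader at price `p`: each opens at `p`, has
positive size, and has its losing and winning prices strictly on either side of `p`. -/
def LegalNew (p : ℤ) (N : Finset Trade) : Prop :=
  ∀ T ∈ N, T.op = p ∧ 0 < T.size ∧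
    ((T.lose < p ∧ p < T.win) ∨ (T.win < p ∧ p < T.lose))

/-- The broker's move: the price changes from `p` to `p + d`; every open trade whose
winning or losing price equals `p + d` is closed, its value at `p + d` being credited
to the broker's gain. -/
def brokerStep (P : Pos) (d : ℤ) : Pos where
  trades := P.trades.filter fun T => ¬(T.win = P.price + d ∨ T.lose = P.price + d)
  gain := P.gain +
    ∑ T ∈ P.trades.filter (fun T => T.win = P.price + d ∨ T.lose = P.price + d),
      T.val (P.price + d)
  price := P.price + d

/-!
Each open trade has value affine in the price, with slope `σ(T)·s(T)`. A trade is worth nothing when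
it opens, and closing a trade moves its value unchanged from the open set to the gain. So the total
value changes only through the price, by the price change times the total slope of the open trades,
and opposite price changes give opposite results.
-/

theorem Trade.val_op (T : Trade) : T.val T.op = 0 := by
  simp [Trade.val]

theorem Trade.val_add (T : Trade) (p d : ℤ) :
    T.val (p + d) = T.val p + d * (T.sign * T.size) := by
  simp only [Trade.val]
  push_cast
  ring

theorem Pos.tval_of_subset (P : Pos) {𝒯' : Finset Trade} (hsub : P.trades ⊆ 𝒯')
    (hop : ∀ T ∈ 𝒯' \ P.trades, T.op = P.price) :
    Pos.tval ⟨𝒯', P.gain, P.price⟩ = P.tval := by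
  have hzero : ∀ T ∈ 𝒯', T ∉ P.trades → T.val P.price = 0 := fun T hT hT' => by
    rw [← hop T (Finset.mem_sdiff.mpr ⟨hT, hT'⟩), T.val_op]
  exact congrArg (· + P.gain) (Finset.sum_subset hsub hzero).symm

theorem tval_brokerStep_eq_sum (P : Pos) (d : ℤ) :
    (brokerStep P d).tval = ∑ T ∈ P.trades, T.val (P.price + d) + P.gain := by
  rw [← Finset.sum_filter_add_sum_filter_not P.trades
    (fun T => T.win = P.price + d ∨ T.lose = P.price + d)]
  simp only [Pos.tval, Pos.val, brokerStep]
  ring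

theorem tval_brokerStep_sub_tval (P : Pos) (d : ℤ) :
    (brokerStep P d).tval - P.tval = d * ∑ T ∈ P.trades, (T.sign : ℚ) * T.size := by
  rw [tval_brokerStep_eq_sum, Pos.tval, Pos.val]
  simp only [Trade.val_add, Finset.sum_add_distrib, ← Finset.mul_sum]
  ring

theorem tval_brokerStep_sub_tval_eq_neg (P : Pos) (d : ℤ) :
    (brokerStep P d).tval - P.tval = -((brokerStep P (-d)).tval - P.tval) := by
  simp [tval_brokerStep_sub_tval]

theorem tval_le_tval_brokerStep_or_neg (P : Pos) (d : ℤ) :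
    P.tval ≤ (brokerStep P d).tval ∨ P.tval ≤ (brokerStep P (-d)).tval := by
  have hneg := tval_brokerStep_sub_tval_eq_neg P d
  by_contra! hlt
  linarith

theorem broker_never_goes_down_general (P : Pos) {𝒯' : Finset Trade} (hsub : P.trades ⊆ 𝒯')
    (hop : ∀ T ∈ 𝒯' \ P.trades, T.op = P.price) (d : ℤ) :
    Pos.tval ⟨𝒯', P.gain, P.price⟩ = P.tval ∧
    (brokerStep ⟨𝒯', P.gain, P.price⟩ d).tval - P.tval
      = d * ∑ T ∈ 𝒯', (T.sign : ℚ) * T.size ∧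
    (brokerStep ⟨𝒯', P.gain, P.price⟩ (-d)).tval - P.tval
      = -(d * ∑ T ∈ 𝒯', (T.sign : ℚ) * T.size) ∧
    (brokerStep ⟨𝒯', P.gain, P.price⟩ d).tval - P.tval
      = -((brokerStep ⟨𝒯', P.gain, P.price⟩ (-d)).tval - P.tval) ∧
    (P.tval ≤ (brokerStep ⟨𝒯', P.gain, P.price⟩ d).tval ∨
      P.tval ≤ (brokerStep ⟨𝒯', P.gain, P.price⟩ (-d)).tval) := by
  rw [← P.tval_of_subset hsub hop]
  exact ⟨rfl,
    tval_brokerStep_sub_tval _ d,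
    by simp [tval_brokerStep_sub_tval],
    tval_brokerStep_sub_tval_eq_neg _ d,
    tval_le_tval_brokerStep_or_neg _ d⟩

/-- One turn of the online game, starting at position `P = (𝒯, g, p)`: after the trader
adds his trades, yielding the open set `𝒯' ⊇ 𝒯` and position `P' = (𝒯', g, p)`, we have
`Tval(P') = Tval(P)`; and if `P⁺`, `P⁻` are the positions after the broker respectively
raises or lowers the price, then `Tval(P⁺) − Tval(P) = ∑_{T ∈ 𝒯'} σ(T)·s(T)` and
`Tval(P⁻) − Tval(P) = −∑_{T ∈ 𝒯'} σ(T)·s(T)`; hence the two deviations are opposite,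
and at least one of `Tval(P⁺) ≥ Tval(P)`, `Tval(P⁻) ≥ Tval(P)` holds. -/
theorem broker_never_goes_down (P : Pos) (𝒯' : Finset Trade)
    (hold : ∀ T ∈ P.trades, T.Valid)
    (hsub : P.trades ⊆ 𝒯') (hnew : LegalNew P.price (𝒯' \ P.trades)) :
    Pos.tval ⟨𝒯', P.gain, P.price⟩ = P.tval ∧
    (brokerStep ⟨𝒯', P.gain, P.price⟩ 1).tval - P.tval
      = ∑ T ∈ 𝒯', (T.sign : ℚ) * T.size ∧
    (brokerStep ⟨𝒯', P.gain, P.price⟩ (-1)).tval - P.tval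
      = -∑ T ∈ 𝒯', (T.sign : ℚ) * T.size ∧
    (brokerStep ⟨𝒯', P.gain, P.price⟩ 1).tval - P.tval
      = -((brokerStep ⟨𝒯', P.gain, P.price⟩ (-1)).tval - P.tval) ∧
    (P.tval ≤ (brokerStep ⟨𝒯', P.gain, P.price⟩ 1).tval ∨
      P.tval ≤ (brokerStep ⟨𝒯', P.gain, P.price⟩ (-1)).tval) := by
  simpa only [Int.cast_one, one_mul] using
    broker_never_goes_down_general P hsub (fun T hT => (hnew T hT).1) 1
end

section
/- In the online game, the broker cannot lose when playing optimally: there exists a broker strategy β (a function assigning to every finite history of the play, including the trades just added by the trader in the current turn, a move in {+1, −1}) such that for every trader strategy, in the resulting play every turn ends in a position of total value ≥ 0; consequently, if the resulting play ever ends (a turn finishes with no open trades), the broker's final gain is ≥ 0. -/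
/-- The starting position of the online game. -/
def startPos : Pos := ⟨∅, 0, 0⟩

/-- The play determined by a trader strategy `τ` (assigning to each history of positions
the set of trades to add) and a broker strategy `β` (assigning to each history, together
with the trades just added, a move: `true` for `+1`, `false` for `−1`).  `playFull τ β n`
is the pair of the position at the end of turn `n` and the history of positions so far. -/
def playFull (τ : List Pos → Finset Trade) (β : List Pos → Finset Trade → Bool) :
    ℕ → Pos × List Pos
  | 0 => (startPos, [startPos])
  | n + 1 =>
    let s := playFull τ β n
    let added := τ s.2
    let mid : Pos := ⟨s.1.trades ∪ added, s.1.gain, s.1.price⟩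
    let next := brokerStep mid (if β s.2 added then 1 else -1)
    (next, s.2 ++ [next])

namespace Trade

lemma val_op_s11 (T : Trade) : T.val T.op = 0 := by
  simp [val]

lemma val_add_s11 (T : Trade) (p d : ℤ) : T.val (p + d) = T.val p + d * (T.sign * T.size) := by
  simp only [val]
  push_cast
  ring

end Trade

namespace Pos

/-- The net exposure of the broker: the signed total size of the open trades, which is the slope
of the value as a function of the price. -/
def exposure (P : Pos) : ℚ := ∑ T ∈ P.trades, T.sign * T.size

/-- The position in the middle of a turn, when the trader has added the trades `N` and the broker
has yet to move. As the open trades form a set, adding a trade that is already open has no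
effect. -/
def addTrades (P : Pos) (N : Finset Trade) : Pos := ⟨P.trades ∪ N, P.gain, P.price⟩

lemma tval_eq_gain_of_trades_eq_empty {P : Pos} (hP : P.trades = ∅) : P.tval = P.gain := by
  simp [tval, val, hP]

lemma tval_addTrades {P : Pos} {N : Finset Trade} (hN : ∀ T ∈ N, T.val P.price = 0) :
    (P.addTrades N).tval = P.tval := by
  have hval : ∑ T ∈ P.trades, T.val P.price = ∑ T ∈ P.trades ∪ N, T.val P.price :=
    Finset.sum_subset Finset.subset_union_left fun T hT hTP =>
      hN T ((Finset.mem_union.mp hT).resolve_left hTP)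
  simp only [tval, val, addTrades, hval]

lemma tval_brokerStep_eq_sum (P : Pos) (d : ℤ) :
    (brokerStep P d).tval = ∑ T ∈ P.trades, T.val (P.price + d) + P.gain := by
  rw [← Finset.sum_filter_not_add_sum_filter P.trades
    fun T => T.win = P.price + d ∨ T.lose = P.price + d]
  simp only [tval, val, brokerStep]
  ring

lemma tval_brokerStep (P : Pos) (d : ℤ) :
    (brokerStep P d).tval = P.tval + d * P.exposure := by
  rw [tval_brokerStep_eq_sum]
  simp only [Trade.val_add_s11, Finset.sum_add_distrib, ← Finset.mul_sum, tval, val, exposure]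
  ring

lemma tval_brokerStep_of_exposure (P : Pos) :
    (brokerStep P (if 0 ≤ P.exposure then 1 else -1)).tval = P.tval + |P.exposure| := by
  rw [tval_brokerStep]
  split_ifs with hup
  · simp [abs_of_nonneg hup]
  · simp [abs_of_neg (not_le.mp hup)]

end Pos

/-- The broker strategy that follows the exposure: move up if the net exposure of the open trades,
including those just added, is nonnegative, and down otherwise. The current position is the last
entry of the history `H`; the default `startPos` stands for an empty history, which does not occur
in a play. -/
def followExposure (H : List Pos) (N : Finset Trade) : Bool :=
  decide (0 ≤ ((H.getLastD startPos).addTrades N).exposure)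

section Play

variable (τ : List Pos → Finset Trade) (β : List Pos → Finset Trade → Bool) (n : ℕ)

lemma playFull_history_getLastD : (playFull τ β n).2.getLastD startPos = (playFull τ β n).1 := by
  cases n <;> simp [playFull]

lemma playFull_succ_fst :
    (playFull τ β (n + 1)).1 =
      brokerStep ((playFull τ β n).1.addTrades (τ (playFull τ β n).2))
        (if β (playFull τ β n).2 (τ (playFull τ β n).2) then 1 else -1) :=
  rfl

end Play

lemma tval_playFull_followExposure_succ {τ : List Pos → Finset Trade} {n : ℕ}
    (hτ : ∀ T ∈ τ (playFull τ followExposure n).2,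
      T.val (playFull τ followExposure n).1.price = 0) :
    (playFull τ followExposure (n + 1)).1.tval =
      (playFull τ followExposure n).1.tval +
        |((playFull τ followExposure n).1.addTrades
          (τ (playFull τ followExposure n).2)).exposure| := by
  rw [playFull_succ_fst, followExposure, playFull_history_getLastD]
  simp only [decide_eq_true_eq]
  rw [Pos.tval_brokerStep_of_exposure, Pos.tval_addTrades hτ]

theorem broker_cannot_lose_general :
    ∃ β : List Pos → Finset Trade → Bool,
      ∀ τ : List Pos → Finset Trade,
        (∀ n : ℕ, ∀ T ∈ τ (playFull τ β n).2, T.op = (playFull τ β n).1.price) →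
        Monotone fun n : ℕ => (playFull τ β n).1.tval := by
  refine ⟨followExposure, fun τ hop => monotone_nat_of_le_succ fun n => ?_⟩
  have hval : ∀ T ∈ τ (playFull τ followExposure n).2,
      T.val (playFull τ followExposure n).1.price = 0 :=
    fun T hT => by rw [← hop n T hT, T.val_op_s11]
  rw [tval_playFull_followExposure_succ hval]
  exact le_add_of_nonneg_right (abs_nonneg _)

/-- The broker cannot lose when playing optimally: there is a broker strategy `β` such
that against every trader strategy `τ` (whose additions are always legal at the current
price), every turn of the resulting play ends in a position of total value `≥ 0`;
consequently, whenever a turn finishes with no open trades, the broker's gain is `≥ 0`. -/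
theorem broker_cannot_lose :
    ∃ β : List Pos → Finset Trade → Bool,
      ∀ τ : List Pos → Finset Trade,
        (∀ n : ℕ, LegalNew (playFull τ β n).1.price (τ (playFull τ β n).2)) →
        (∀ n : ℕ, 0 ≤ (playFull τ β n).1.tval) ∧
        (∀ n : ℕ, (playFull τ β n).1.trades = ∅ → 0 ≤ (playFull τ β n).1.gain) := by
  obtain ⟨β, hβ⟩ := broker_cannot_lose_general
  refine ⟨β, fun τ hτ => ?_⟩
  have hmono := hβ τ fun n T hT => (hτ n T hT).1
  have hstart : (playFull τ β 0).1.tval = 0 := Pos.tval_eq_gain_of_trades_eq_empty rfl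
  have hnonneg (n : ℕ) : 0 ≤ (playFull τ β n).1.tval := hstart.symm.trans_le (hmono n.zero_le)
  refine ⟨hnonneg, fun n hempty => ?_⟩
  rw [← Pos.tval_eq_gain_of_trades_eq_empty hempty]
  exact hnonneg n
end
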